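/- Let Γ be a metric-compatible (x₀,t₀)-soliton on the trivial bundle ℝⁿ × ℝᵐ with polynomial curvature growth to order two, and set G₀(x) := e^{−|x−x₀|²/(4t₀)}. Then: (a) ∫_{ℝⁿ} ((4 − n) + |x−x₀|²/(2t₀)) |F(x)|² G₀(x) dx = 0; and (b) for every index γ ∈ {1, …, n}, ∫_{ℝⁿ} (x − x₀)_γ |F(x)|² G₀(x) dx = 0. -/

import Mathlib

open MeasureTheory Real Filter Matrix
open scoped ENNReal

noncomputable section

namespace YM

variable {n m : ℕ}

/-- A connection on the trivial bundle `ℝⁿ × ℝᵐ`, given by its coefficient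
matrices `Γ₁(x), …, Γₙ(x)`. -/
abbrev Conn (n m : ℕ) :=
  (Fin n → ℝ) → Fin n → Matrix (Fin m) (Fin m) ℝ

/-- Entrywise `i`-th partial derivative of a matrix-valued map on `ℝⁿ`. -/
def pder (i : Fin n) (A : (Fin n → ℝ) → Matrix (Fin m) (Fin m) ℝ)
    (x : Fin n → ℝ) : Matrix (Fin m) (Fin m) ℝ :=
  Matrix.of fun a b => fderiv ℝ (fun y => A y a b) x (Pi.single i 1)

/-- Smoothness (entrywise) of a matrix-valued map on `ℝⁿ`. -/
def SmoothMat (A : (Fin n → ℝ) → Matrix (Fin m) (Fin m) ℝ) : Prop :=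
  ∀ a b, ContDiff ℝ (⊤ : ℕ∞) fun y => A y a b

/-- Smoothness of a connection. -/
def Smooth (Γ : Conn n m) : Prop :=
  ∀ i, SmoothMat fun x => Γ x i

/-- Matrix commutator. -/
def comm (A B : Matrix (Fin m) (Fin m) ℝ) : Matrix (Fin m) (Fin m) ℝ :=
  A * B - B * A

/-- Curvature `F_{ij} = ∂ᵢΓⱼ − ∂ⱼΓᵢ + [Γᵢ, Γⱼ]`. -/
def curv (Γ : Conn n m) (i j : Fin n) (x : Fin n → ℝ) :
    Matrix (Fin m) (Fin m) ℝ :=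
  pder i (fun y => Γ y j) x - pder j (fun y => Γ y i) x + comm (Γ x i) (Γ x j)

/-- Covariant derivative `∇ᵢA = ∂ᵢA + [Γᵢ, A]`. -/
def covDer (Γ : Conn n m) (i : Fin n)
    (A : (Fin n → ℝ) → Matrix (Fin m) (Fin m) ℝ) (x : Fin n → ℝ) :
    Matrix (Fin m) (Fin m) ℝ :=
  pder i A x + comm (Γ x i) (A x)

/-- `(D*F)ₖ = −Σᵢ ∇ᵢF_{ik}`. -/
def dstarF (Γ : Conn n m) (k : Fin n) (x : Fin n → ℝ) :
    Matrix (Fin m) (Fin m) ℝ :=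
  - ∑ i, covDer Γ i (fun y => curv Γ i k y) x

/-- Squared Frobenius norm of a matrix. -/
def frobSq (A : Matrix (Fin m) (Fin m) ℝ) : ℝ := ∑ a, ∑ b, (A a b) ^ 2

/-- Frobenius norm of a matrix. -/
def frobNorm (A : Matrix (Fin m) (Fin m) ℝ) : ℝ := Real.sqrt (frobSq A)

/-- Frobenius inner product `⟨A, B⟩ = tr(A Bᵀ)`. -/
def frobInner (A B : Matrix (Fin m) (Fin m) ℝ) : ℝ := ∑ a, ∑ b, A a b * B a b

/-- `|F(x)|² = Σ_{i,j} ‖F_{ij}(x)‖²` (Frobenius norms). -/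
def normSqF (Γ : Conn n m) (x : Fin n → ℝ) : ℝ :=
  ∑ i, ∑ j, frobSq (curv Γ i j x)

/-- `|F(x)|`. -/
def normF (Γ : Conn n m) (x : Fin n → ℝ) : ℝ := Real.sqrt (normSqF Γ x)

/-- Euclidean norm on `ℝⁿ`. -/
def enorm (x : Fin n → ℝ) : ℝ := Real.sqrt (∑ i, x i ^ 2)

/-- Metric compatibility: all coefficient matrices are skew-symmetric. -/
def MetricCompat (Γ : Conn n m) : Prop :=
  ∀ x i, (Γ x i)ᵀ = -(Γ x i)

/-- `(x₀,t₀)`-soliton: `Σᵢ ∇ᵢF_{ik} = (1/(2t₀)) Σᵢ (x−x₀)ᵢ F_{ik}`. -/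
def IsSolitonAt (Γ : Conn n m) (x₀ : Fin n → ℝ) (t₀ : ℝ) : Prop :=
  ∀ (x : Fin n → ℝ) (k : Fin n),
    ∑ i, covDer Γ i (fun y => curv Γ i k y) x
      = (1 / (2 * t₀)) • ∑ i, (x i - x₀ i) • curv Γ i k x

/-- `(0,1)`-soliton. -/
def IsSoliton (Γ : Conn n m) : Prop := IsSolitonAt Γ 0 1

/-- The `ℱ`-functional
`ℱ_{x₀,t₀}(Γ) = t₀² (4πt₀)^{−n/2} ∫ |F|² e^{−|x−x₀|²/(4t₀)}`. -/
def Ffunc (Γ : Conn n m) (x₀ : Fin n → ℝ) (t₀ : ℝ) : ℝ :=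
  t₀ ^ 2 * (4 * π * t₀) ^ (-(n : ℝ) / 2) *
    ∫ x : Fin n → ℝ,
      normSqF Γ x * Real.exp (-(∑ i, (x i - x₀ i) ^ 2) / (4 * t₀))

/-- The entropy `λ(Γ) = sup_{x₀, t₀>0} ℱ_{x₀,t₀}(Γ)`, valued in `[0,∞]`. -/
def entropy (Γ : Conn n m) : ℝ≥0∞ :=
  ⨆ (x₀ : Fin n → ℝ) (t₀ : ℝ) (_ : 0 < t₀), ENNReal.ofReal (Ffunc Γ x₀ t₀)

/-- Polynomial curvature growth: `|F(x)| ≤ p(|x|)`. -/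
def PolyCurvGrowth (Γ : Conn n m) : Prop :=
  ∃ p : Polynomial ℝ, ∀ x, normF Γ x ≤ p.eval (enorm x)

/-- Polynomial curvature growth to order two. -/
def PolyCurvGrowth2 (Γ : Conn n m) : Prop :=
  ∃ p : Polynomial ℝ, ∀ x,
    normF Γ x
      + (∑ i, ∑ j, ∑ k, frobNorm (covDer Γ i (fun y => curv Γ j k y) x))
      + (∑ i, ∑ j, ∑ k, ∑ l,
          frobNorm (covDer Γ i
            (fun y => covDer Γ j (fun z => curv Γ k l z) y) x))
      ≤ p.eval (enorm x)

/-- Cylindrical: some nonzero constant vector `V` satisfies `V ⌟ F ≡ 0`. -/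
def Cylindrical (Γ : Conn n m) : Prop :=
  ∃ V : Fin n → ℝ, V ≠ 0 ∧
    ∀ (x : Fin n → ℝ) (k : Fin n), ∑ i, V i • curv Γ i k x = 0

/-- `(DB)_{ij} = ∇ᵢBⱼ − ∇ⱼBᵢ`. -/
def Dop (Γ B : Conn n m) (i j : Fin n) (x : Fin n → ℝ) :
    Matrix (Fin m) (Fin m) ℝ :=
  covDer Γ i (fun y => B y j) x - covDer Γ j (fun y => B y i) x

/-- The second variation operator
`(L_{x₀,t₀}B)ₖ = −Σᵢ∇ᵢ(DB)_{ik} + (1/(2t₀))Σᵢ(x−x₀)ᵢ(DB)_{ik} + Σᵢ[Bᵢ,F_{ik}]`. -/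
def Lop (Γ B : Conn n m) (x₀ : Fin n → ℝ) (t₀ : ℝ) (k : Fin n)
    (x : Fin n → ℝ) : Matrix (Fin m) (Fin m) ℝ :=
  (- ∑ i, covDer Γ i (fun y => Dop Γ B i k y) x)
    + (1 / (2 * t₀)) • ∑ i, (x i - x₀ i) • Dop Γ B i k x
    + ∑ i, comm (B x i) (curv Γ i k x)

/-- The Gaussian weight `G(x) = (4π)^{−n/2} e^{−|x|²/4}`. -/
def gaussG (n : ℕ) (x : Fin n → ℝ) : ℝ :=
  (4 * π) ^ (-(n : ℝ) / 2) * Real.exp (-(∑ i, x i ^ 2) / 4)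

/-- The second variation form `Q(σ,V,B)` of a `(0,1)`-soliton. -/
def Q (Γ : Conn n m) (σ : ℝ) (V : Fin n → ℝ) (B : Conn n m) : ℝ :=
  -4 * σ ^ 2 * (∫ x : Fin n → ℝ, (∑ k, frobSq (dstarF Γ k x)) * gaussG n x)
    - 2 * (∫ x : Fin n → ℝ,
        (∑ k, frobSq (∑ i, V i • curv Γ i k x)) * gaussG n x)
    + 4 * (∫ x : Fin n → ℝ,
        (∑ k, frobInner (B x k) (Lop Γ B 0 1 k x)) * gaussG n x)
    - 4 * (∫ x : Fin n → ℝ,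
        (∑ k, frobInner (B x k)
          (∑ i, (σ * x i + V i) • curv Γ i k x)) * gaussG n x)

/-- Skew-symmetric-matrix-valued 1-form. -/
def SkewVals (B : Conn n m) : Prop := ∀ x i, (B x i)ᵀ = -(B x i)

/-- `ℱ`-instability. -/
def FUnstable (Γ : Conn n m) : Prop :=
  ∃ B : Conn n m, Smooth B ∧ HasCompactSupport B ∧ SkewVals B ∧
    ∀ (σ : ℝ) (V : Fin n → ℝ), Q Γ σ V B < 0

/-- Joint smoothness (entrywise) of a one-parameter family of connections on a
time set `S`. -/
def SmoothFamilyOn (Γt : ℝ → Conn n m) (S : Set ℝ) : Prop :=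
  ∀ (k : Fin n) (a b : Fin m),
    ContDiffOn ℝ (⊤ : ℕ∞) (fun p : ℝ × (Fin n → ℝ) => Γt p.1 p.2 k a b)
      (S ×ˢ (Set.univ : Set (Fin n → ℝ)))

/-- Yang–Mills flow: `∂ₜ(Γ_t)ₖ = Σᵢ ∇ᵢ(F_t)_{ik}` on a time set `S`. -/
def YMFlowOn (Γt : ℝ → Conn n m) (S : Set ℝ) : Prop :=
  ∀ t ∈ S, ∀ (x : Fin n → ℝ) (k : Fin n) (a b : Fin m),
    HasDerivWithinAt (fun t' => Γt t' x k a b)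
      ((∑ i, covDer (Γt t) i (fun y => curv (Γt t) i k y) x) a b) S t

/-- Locally uniform in time polynomial curvature growth to order two. -/
def PolyCurvGrowth2On (Γt : ℝ → Conn n m) (S : Set ℝ) : Prop :=
  ∀ J : Set ℝ, IsCompact J → J ⊆ S →
    ∃ p : Polynomial ℝ, ∀ t ∈ J, ∀ x,
      normF (Γt t) x
        + (∑ i, ∑ j, ∑ k,
            frobNorm (covDer (Γt t) i (fun y => curv (Γt t) j k y) x))
        + (∑ i, ∑ j, ∑ k, ∑ l,
            frobNorm (covDer (Γt t) i
              (fun y => covDer (Γt t) j (fun z => curv (Γt t) k l z) y) x))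
        ≤ p.eval (enorm x)

end YM

namespace YM

variable {n m : ℕ}

structure PolyB (f : (Fin n → ℝ) → ℝ) : Prop where
  cont : Continuous f
  bound : ∃ (C : ℝ) (N : ℕ), 0 ≤ C ∧ ∀ x, |f x| ≤ C * (1 + ‖x‖) ^ N

lemma PolyB.const (c : ℝ) : PolyB (fun _ : Fin n → ℝ => c) :=
  ⟨continuous_const, |c|, 0, abs_nonneg c, fun x => by simp⟩

lemma PolyB.coord (i : Fin n) : PolyB (fun x : Fin n → ℝ => x i) :=
  ⟨continuous_apply i, 1, 1, zero_le_one, fun x => by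
    have := norm_le_pi_norm x i
    rw [Real.norm_eq_abs] at this
    simp; linarith⟩

lemma PolyB.add {f g : (Fin n → ℝ) → ℝ} (hf : PolyB f) (hg : PolyB g) :
    PolyB (fun x => f x + g x) := by
  obtain ⟨hfc, C, N, hC, hfb⟩ := hf
  obtain ⟨hgc, D, M, hD, hgb⟩ := hg
  refine ⟨hfc.add hgc, C + D, N + M, by positivity, fun x => ?_⟩
  have h1 : (1 : ℝ) ≤ 1 + ‖x‖ := by linarith [norm_nonneg x]
  have hN : (1 + ‖x‖) ^ N ≤ (1 + ‖x‖) ^ (N + M) := pow_le_pow_right₀ h1 (by omega)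
  have hM : (1 + ‖x‖) ^ M ≤ (1 + ‖x‖) ^ (N + M) := pow_le_pow_right₀ h1 (by omega)
  calc |f x + g x| ≤ |f x| + |g x| := abs_add_le _ _
    _ ≤ C * (1 + ‖x‖) ^ N + D * (1 + ‖x‖) ^ M := add_le_add (hfb x) (hgb x)
    _ ≤ C * (1 + ‖x‖) ^ (N + M) + D * (1 + ‖x‖) ^ (N + M) := by gcongr
    _ = _ := by ring

lemma PolyB.mul {f g : (Fin n → ℝ) → ℝ} (hf : PolyB f) (hg : PolyB g) :
    PolyB (fun x => f x * g x) := by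
  obtain ⟨hfc, C, N, hC, hfb⟩ := hf
  obtain ⟨hgc, D, M, hD, hgb⟩ := hg
  refine ⟨hfc.mul hgc, C * D, N + M, by positivity, fun x => ?_⟩
  calc |f x * g x| = |f x| * |g x| := abs_mul _ _
    _ ≤ (C * (1 + ‖x‖) ^ N) * (D * (1 + ‖x‖) ^ M) :=
        mul_le_mul (hfb x) (hgb x) (abs_nonneg _) (by positivity)
    _ = _ := by ring

lemma PolyB.sum {ι : Type*} (s : Finset ι) {f : ι → (Fin n → ℝ) → ℝ}
    (hf : ∀ i, PolyB (f i)) : PolyB (fun x => ∑ i ∈ s, f i x) := by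
  classical
  induction s using Finset.induction_on with
  | empty => simpa using PolyB.const 0
  | insert a s ha ih => simpa [Finset.sum_insert ha] using (hf a).add ih

lemma PolyB.of_le {f g : (Fin n → ℝ) → ℝ} (hf : Continuous f) (hg : PolyB g)
    (h : ∀ x, |f x| ≤ g x) : PolyB f := by
  obtain ⟨_, C, N, hC, hb⟩ := hg
  exact ⟨hf, C, N, hC, fun x => (h x).trans ((le_abs_self _).trans (hb x))⟩

lemma enorm_le (x : Fin n → ℝ) : enorm x ≤ n * (1 + ‖x‖) := by
  unfold enorm
  apply Real.sqrt_le_iff.2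
  have h0 := norm_nonneg x
  refine ⟨by positivity, ?_⟩
  calc ∑ i, x i ^ 2 ≤ ∑ i : Fin n, (1 + ‖x‖) ^ 2 := by
        refine Finset.sum_le_sum fun i _ => ?_
        have := norm_le_pi_norm x i
        rw [Real.norm_eq_abs] at this
        rw [← sq_abs]
        gcongr; linarith
    _ = n * (1 + ‖x‖) ^ 2 := by simp
    _ ≤ (n * (1 + ‖x‖)) ^ 2 := by
        rw [mul_pow]
        gcongr
        rcases Nat.eq_zero_or_pos n with h | h
        · simp [h]
        · have : (1:ℝ) ≤ n := by exact_mod_cast h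
          nlinarith

lemma PolyB.enorm : PolyB (fun x : Fin n → ℝ => enorm x) := by
  refine ⟨?_, n, 1, by positivity, fun x => ?_⟩
  · unfold YM.enorm; fun_prop
  · rw [abs_of_nonneg (show 0 ≤ YM.enorm x from Real.sqrt_nonneg _), pow_one]; exact enorm_le x

lemma PolyB.pow {f : (Fin n → ℝ) → ℝ} (hf : PolyB f) (k : ℕ) : PolyB (fun x => f x ^ k) := by
  induction k with
  | zero => simpa using PolyB.const 1
  | succ k ih => simpa [pow_succ] using ih.mul hf

lemma PolyB.poly (p : Polynomial ℝ) : PolyB (fun x : Fin n → ℝ => p.eval (YM.enorm x)) := by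
  simp only [Polynomial.eval_eq_sum_range]
  exact PolyB.sum _ fun i => (PolyB.const _).mul (PolyB.enorm.pow i)

lemma one_dim (N : ℕ) (a t : ℝ) (ht : 0 < t) :
    Integrable fun x : ℝ => (1 + |x|) ^ N * Real.exp (-(x - a) ^ 2 / (4 * t)) := by
  have key : Integrable fun x : ℝ => (1 + |x + a|) ^ N * Real.exp (-x ^ 2 / (4 * t)) := by
    have hb : 0 < 1 / (4 * t) := by positivity
    have h0 : Integrable fun x : ℝ => Real.exp (-(1 / (4 * t)) * x ^ 2) :=
      integrable_exp_neg_mul_sq hb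
    have hN : Integrable fun x : ℝ => x ^ N * Real.exp (-(1 / (4 * t)) * x ^ 2) := by
      have := integrable_rpow_mul_exp_neg_mul_sq hb (s := N) (by
        have : (0:ℝ) ≤ N := by positivity
        linarith)
      simpa using this
    have hdom := ((h0.const_mul ((1 + |a|) ^ N)).add (hN.norm)).const_mul (2 ^ (N - 1))
    refine (hdom.mono' (by fun_prop) (ae_of_all _ fun x => ?_))
    have e : -x ^ 2 / (4 * t) = -(1 / (4 * t)) * x ^ 2 := by ring
    rw [e]
    have hp := Real.exp_pos (-(1 / (4 * t)) * x ^ 2)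
    simp only [Pi.add_apply, norm_mul, norm_pow, Real.norm_eq_abs, abs_of_pos hp]
    have h1 : abs (1 + |x + a|) ≤ (1 + |a|) + |x| := by
      rw [abs_of_nonneg (by positivity)]
      linarith [abs_add_le x a]
    have h2 : abs (1 + |x + a|) ^ N ≤ 2 ^ (N - 1) * ((1 + |a|) ^ N + |x| ^ N) :=
      (pow_le_pow_left₀ (abs_nonneg _) h1 N).trans
        (add_pow_le (by positivity) (abs_nonneg _) N)
    calc _ ≤ (2 ^ (N - 1) * ((1 + |a|) ^ N + |x| ^ N)) * Real.exp (-(1 / (4 * t)) * x ^ 2) := by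
          gcongr
      _ = _ := by ring
  have := key.comp_sub_right a
  simpa using this

lemma integrable_gauss (N : ℕ) (x₀ : Fin n → ℝ) (t : ℝ) (ht : 0 < t) :
    Integrable fun x : Fin n → ℝ =>
      (1 + ‖x‖) ^ N * Real.exp (-(∑ i, (x i - x₀ i) ^ 2) / (4 * t)) := by
  have h := Integrable.fintype_prod (f := fun (i : Fin n) (v : ℝ) =>
    (1 + |v|) ^ N * Real.exp (-(v - x₀ i) ^ 2 / (4 * t))) (μ := fun _ => volume)
    (fun i => one_dim N (x₀ i) t ht)
  refine h.mono' (by fun_prop) (ae_of_all _ fun x => ?_)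
  rw [Finset.prod_mul_distrib, ← Real.exp_sum, Finset.prod_pow, Real.norm_eq_abs,
    abs_of_nonneg (by positivity)]
  have e : -(∑ i, (x i - x₀ i) ^ 2) / (4 * t) = ∑ i, -(x i - x₀ i) ^ 2 / (4 * t) := by
    rw [← Finset.sum_neg_distrib, Finset.sum_div]
  rw [e]
  gcongr
  have hone : ∀ i, 1 ≤ 1 + |x i| := fun i => by linarith [abs_nonneg (x i)]
  have hP : (1:ℝ) ≤ ∏ i, (1 + |x i|) := Finset.one_le_prod fun i _ => hone i
  have : ‖x‖ ≤ (∏ i, (1 + |x i|)) - 1 := by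
    rw [pi_norm_le_iff_of_nonneg (by linarith)]
    intro i
    have h3 : (1:ℝ) ≤ ∏ k ∈ Finset.univ.erase i, (1 + |x k|) :=
      Finset.one_le_prod fun k _ => hone k
    rw [Real.norm_eq_abs, ← Finset.mul_prod_erase _ _ (Finset.mem_univ i)]
    nlinarith [hone i]
  linarith

lemma PolyB.integrable {f : (Fin n → ℝ) → ℝ} (hf : PolyB f) (x₀ : Fin n → ℝ) (t : ℝ)
    (ht : 0 < t) :
    Integrable fun x : Fin n → ℝ => f x * Real.exp (-(∑ i, (x i - x₀ i) ^ 2) / (4 * t)) := by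
  obtain ⟨hc, C, N, hC, hb⟩ := hf
  refine ((integrable_gauss N x₀ t ht).const_mul C).mono' (by fun_prop) (ae_of_all _ fun x => ?_)
  rw [norm_mul, Real.norm_eq_abs, Real.norm_eq_abs, Real.abs_exp, ← mul_assoc]
  gcongr
  exact hb x

structure Good (j : Fin n) (f f' : (Fin n → ℝ) → ℝ) : Prop where
  der : ∀ x, HasLineDerivAt ℝ f (f' x) x (Pi.single j 1)
  pb : PolyB f
  pb' : PolyB f'

lemma Good.const (j : Fin n) (c : ℝ) : Good j (fun _ => c) (fun _ => 0) :=
  ⟨fun _ => hasDerivAt_const _ _, PolyB.const c, PolyB.const 0⟩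

lemma Good.coord (j i : Fin n) :
    Good j (fun x => x i) (fun _ => (Pi.single j 1 : Fin n → ℝ) i) := by
  refine ⟨fun x => ?_, PolyB.coord i, PolyB.const _⟩
  exact ((ContinuousLinearMap.proj (R := ℝ) (φ := fun _ : Fin n => ℝ) i).hasFDerivAt
    (x := x)).hasLineDerivAt (Pi.single j 1)

lemma Good.add {j : Fin n} {f f' g g' : (Fin n → ℝ) → ℝ} (hf : Good j f f') (hg : Good j g g') :
    Good j (fun x => f x + g x) (fun x => f' x + g' x) :=
  ⟨fun x => (hf.der x).fun_add (hg.der x), hf.pb.add hg.pb, hf.pb'.add hg.pb'⟩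

lemma Good.mul {j : Fin n} {f f' g g' : (Fin n → ℝ) → ℝ} (hf : Good j f f') (hg : Good j g g') :
    Good j (fun x => f x * g x) (fun x => f' x * g x + f x * g' x) :=
  ⟨fun x => by
    have := (HasDerivAt.fun_mul (hf.der x) (hg.der x))
    simpa [HasLineDerivAt] using this,
   hf.pb.mul hg.pb, (hf.pb'.mul hg.pb).add (hf.pb.mul hg.pb')⟩

lemma Good.sum {ι : Type*} (s : Finset ι) {j : Fin n} {f f' : ι → (Fin n → ℝ) → ℝ}
    (hf : ∀ i, Good j (f i) (f' i)) :
    Good j (fun x => ∑ i ∈ s, f i x) (fun x => ∑ i ∈ s, f' i x) :=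
  ⟨fun x => HasDerivAt.fun_sum (fun i _ => (hf i).der x), PolyB.sum _ fun i => (hf i).pb,
    PolyB.sum _ fun i => (hf i).pb'⟩

lemma gauss_der (x₀ : Fin n → ℝ) (t : ℝ) (j : Fin n) (x : Fin n → ℝ) :
    HasLineDerivAt ℝ (fun x : Fin n → ℝ => Real.exp (-(∑ i, (x i - x₀ i) ^ 2) / (4 * t)))
      (Real.exp (-(∑ i, (x i - x₀ i) ^ 2) / (4 * t)) * (-(x j - x₀ j) / (2 * t))) x
      (Pi.single j 1) := by
  have h1 : ∀ i, HasDerivAt (fun s : ℝ => ((x + s • (Pi.single j 1 : Fin n → ℝ)) i - x₀ i) ^ 2)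
      (2 * (x i - x₀ i) * (Pi.single j 1 : Fin n → ℝ) i) 0 := by
    intro i
    have := (((Good.coord j i).der x).sub_const (x₀ i)).fun_pow 2
    simpa using this
  have h2 := ((HasDerivAt.fun_sum (u := Finset.univ) (fun i _ => h1 i)).fun_neg.div_const (4 * t)).exp
  refine HasDerivAt.congr_deriv h2 ?_
  simp [Pi.single_apply]
  ring

lemma Good.int {j : Fin n} {f f' : (Fin n → ℝ) → ℝ} (hf : Good j f f')
    (x₀ : Fin n → ℝ) (t : ℝ) (ht : 0 < t) :
    Integrable (fun x => (f' x - f x * ((x j - x₀ j) / (2 * t))) *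
      Real.exp (-(∑ i, (x i - x₀ i) ^ 2) / (4 * t))) ∧
    ∫ x, (f' x - f x * ((x j - x₀ j) / (2 * t))) *
      Real.exp (-(∑ i, (x i - x₀ i) ^ 2) / (4 * t)) = 0 := by
  have hp : PolyB (fun x => f' x - f x * ((x j - x₀ j) / (2 * t))) := by
    have := hf.pb'.add (hf.pb.mul (((PolyB.coord j).add (PolyB.const (-x₀ j))).mul
      (PolyB.const (-(1 / (2 * t))))))
    convert this using 2
    ring
  have hi := hp.integrable x₀ t ht
  refine ⟨hi, ?_⟩
  have := integral_bilinear_hasLineDerivAt_right_eq_neg_left_of_integrable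
    (μ := (volume : Measure (Fin n → ℝ)))
    (f := fun _ => (1:ℝ)) (f' := fun _ => (0:ℝ))
    (g := fun x => f x * Real.exp (-(∑ i, (x i - x₀ i) ^ 2) / (4 * t)))
    (g' := fun x => (f' x - f x * ((x j - x₀ j) / (2 * t))) *
      Real.exp (-(∑ i, (x i - x₀ i) ^ 2) / (4 * t))) (v := Pi.single j 1)
    (B := ContinuousLinearMap.mul ℝ ℝ) (by simp) (by simpa using hi)
    (by simpa using hf.pb.integrable x₀ t ht) (fun x _ => hasDerivAt_const _ _)
    (fun x _ => by
      have := (HasDerivAt.fun_mul (hf.der x) (gauss_der x₀ t j x))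
      refine HasDerivAt.congr_deriv this ?_
      simp only [zero_smul, add_zero]
      ring)
  simpa using this

end YM

namespace YM

variable {n m : ℕ}

lemma SmoothMat.diff {A : (Fin n → ℝ) → Matrix (Fin m) (Fin m) ℝ} (hA : SmoothMat A)
    (a b : Fin m) (x : Fin n → ℝ) : DifferentiableAt ℝ (fun y => A y a b) x :=
  ((hA a b).differentiable (by simp)) x

lemma SmoothMat.cont {A : (Fin n → ℝ) → Matrix (Fin m) (Fin m) ℝ} (hA : SmoothMat A)
    (a b : Fin m) : Continuous (fun y => A y a b) := (hA a b).continuous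

lemma SmoothMat.pder {A : (Fin n → ℝ) → Matrix (Fin m) (Fin m) ℝ} (hA : SmoothMat A)
    (i : Fin n) : SmoothMat (fun x => YM.pder i A x) := by
  intro a b
  have h : ContDiff ℝ (⊤ : ℕ∞) (fderiv ℝ (fun y => A y a b)) :=
    (hA a b).fderiv_right (by simp)
  exact h.clm_apply contDiff_const

lemma SmoothMat.add {A B : (Fin n → ℝ) → Matrix (Fin m) (Fin m) ℝ} (hA : SmoothMat A)
    (hB : SmoothMat B) : SmoothMat (fun x => A x + B x) :=
  fun a b => (hA a b).add (hB a b)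

lemma SmoothMat.sub {A B : (Fin n → ℝ) → Matrix (Fin m) (Fin m) ℝ} (hA : SmoothMat A)
    (hB : SmoothMat B) : SmoothMat (fun x => A x - B x) :=
  fun a b => (hA a b).sub (hB a b)

lemma SmoothMat.mul {A B : (Fin n → ℝ) → Matrix (Fin m) (Fin m) ℝ} (hA : SmoothMat A)
    (hB : SmoothMat B) : SmoothMat (fun x => A x * B x) := by
  intro a b
  simp only [Matrix.mul_apply]
  exact ContDiff.sum fun k _ => (hA a k).mul (hB k b)

lemma SmoothMat.comm {A B : (Fin n → ℝ) → Matrix (Fin m) (Fin m) ℝ} (hA : SmoothMat A)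
    (hB : SmoothMat B) : SmoothMat (fun x => YM.comm (A x) (B x)) :=
  (hA.mul hB).sub (hB.mul hA)

lemma smooth_curv {Γ : Conn n m} (h : Smooth Γ) (i j : Fin n) :
    SmoothMat (fun x => curv Γ i j x) :=
  (((h j).pder i).sub ((h i).pder j)).add ((h i).comm (h j))

lemma smooth_covDer {Γ : Conn n m} (h : Smooth Γ) (i : Fin n)
    {A : (Fin n → ℝ) → Matrix (Fin m) (Fin m) ℝ} (hA : SmoothMat A) :
    SmoothMat (fun x => covDer Γ i A x) :=
  (hA.pder i).add ((h i).comm hA)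

lemma pder_add {A B : (Fin n → ℝ) → Matrix (Fin m) (Fin m) ℝ} (hA : SmoothMat A)
    (hB : SmoothMat B) (i : Fin n) (x : Fin n → ℝ) :
    pder i (fun y => A y + B y) x = pder i A x + pder i B x := by
  ext a b
  simp only [pder, Matrix.of_apply, Matrix.add_apply]
  rw [fderiv_fun_add (hA.diff a b x) (hB.diff a b x)]
  rfl

lemma pder_sub {A B : (Fin n → ℝ) → Matrix (Fin m) (Fin m) ℝ} (hA : SmoothMat A)
    (hB : SmoothMat B) (i : Fin n) (x : Fin n → ℝ) :
    pder i (fun y => A y - B y) x = pder i A x - pder i B x := by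
  ext a b
  simp only [pder, Matrix.of_apply, Matrix.sub_apply]
  rw [fderiv_fun_sub (hA.diff a b x) (hB.diff a b x)]
  rfl

lemma pder_mul {A B : (Fin n → ℝ) → Matrix (Fin m) (Fin m) ℝ} (hA : SmoothMat A)
    (hB : SmoothMat B) (i : Fin n) (x : Fin n → ℝ) :
    pder i (fun y => A y * B y) x = pder i A x * B x + A x * pder i B x := by
  ext a b
  simp only [pder, Matrix.of_apply, Matrix.mul_apply, Matrix.add_apply]
  rw [fderiv_fun_sum (fun k _ => (hA.diff a k x).fun_mul (hB.diff k b x))]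
  rw [_root_.sum_apply, ← Finset.sum_add_distrib]
  refine Finset.sum_congr rfl fun k _ => ?_
  rw [fderiv_fun_mul (hA.diff a k x) (hB.diff k b x)]
  simp
  ring

lemma pder_comm {A B : (Fin n → ℝ) → Matrix (Fin m) (Fin m) ℝ} (hA : SmoothMat A)
    (hB : SmoothMat B) (i : Fin n) (x : Fin n → ℝ) :
    pder i (fun y => comm (A y) (B y)) x = comm (pder i A x) (B x) + comm (A x) (pder i B x) := by
  unfold comm
  rw [pder_sub (hA.mul hB) (hB.mul hA), pder_mul hA hB, pder_mul hB hA]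
  abel

lemma pder_pder {A : (Fin n → ℝ) → Matrix (Fin m) (Fin m) ℝ} (hA : SmoothMat A)
    (i j : Fin n) (x : Fin n → ℝ) :
    pder i (fun y => pder j A y) x = pder j (fun y => pder i A y) x := by
  ext a b
  simp only [pder, Matrix.of_apply]
  have h : ContDiff ℝ (⊤ : ℕ∞) (fderiv ℝ (fun y => A y a b)) :=
    (hA a b).fderiv_right (by simp)
  have hd : DifferentiableAt ℝ (fderiv ℝ (fun y => A y a b)) x :=
    (h.differentiable (by simp)) x
  have hs : IsSymmSndFDerivAt ℝ (fun y => A y a b) x :=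
    (hA a b).contDiffAt.isSymmSndFDerivAt (by
      simp only [minSmoothness_of_isRCLikeNormedField]
      exact WithTop.coe_le_coe.2 (le_top : (2 : ℕ∞) ≤ ⊤))
  rw [fderiv_clm_apply hd (by fun_prop), fderiv_clm_apply hd (by fun_prop)]
  simpa using hs _ _

lemma curv_antisymm (Γ : Conn n m) (i j : Fin n) (x : Fin n → ℝ) :
    curv Γ j i x = - curv Γ i j x := by
  unfold curv comm; abel

lemma pder_curv {Γ : Conn n m} (h : Smooth Γ) (i j k : Fin n) (x : Fin n → ℝ) :
    pder i (fun y => curv Γ j k y) x =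
      pder i (fun y => pder j (fun z => Γ z k) y) x - pder i (fun y => pder k (fun z => Γ z j) y) x
      + (comm (pder i (fun y => Γ y j) x) (Γ x k) + comm (Γ x j) (pder i (fun y => Γ y k) x)) := by
  unfold curv
  rw [pder_add (((h k).pder j).sub ((h j).pder k)) ((h j).comm (h k)),
    pder_sub ((h k).pder j) ((h j).pder k), pder_comm (h j) (h k)]

lemma bianchi {Γ : Conn n m} (h : Smooth Γ) (i j k : Fin n) (x : Fin n → ℝ) :
    covDer Γ i (fun y => curv Γ j k y) x + covDer Γ j (fun y => curv Γ k i y) x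
      + covDer Γ k (fun y => curv Γ i j y) x = 0 := by
  unfold covDer
  simp only [pder_curv h]
  rw [pder_pder (h k) i j, pder_pder (h j) i k, pder_pder (h i) j k]
  unfold curv comm
  noncomm_ring

lemma covDer_antisymm {Γ : Conn n m} (h : Smooth Γ) (i j k : Fin n) (x : Fin n → ℝ) :
    covDer Γ i (fun y => curv Γ k j y) x = - covDer Γ i (fun y => curv Γ j k y) x := by
  unfold covDer
  simp only [pder_curv h]
  unfold curv comm
  noncomm_ring

def fB (m : ℕ) : Matrix (Fin m) (Fin m) ℝ →ₗ[ℝ] Matrix (Fin m) (Fin m) ℝ →ₗ[ℝ] ℝ :=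
  LinearMap.mk₂ ℝ frobInner
    (fun A B C => by simp [frobInner, add_mul, Finset.sum_add_distrib])
    (fun c A B => by simp [frobInner, mul_assoc, Finset.mul_sum])
    (fun A B C => by simp [frobInner, mul_add, Finset.sum_add_distrib])
    (fun c A B => by simp [frobInner, mul_left_comm, Finset.mul_sum])

lemma fB_apply (A B : Matrix (Fin m) (Fin m) ℝ) : fB m A B = frobInner A B := rfl

lemma frobInner_trace (A B : Matrix (Fin m) (Fin m) ℝ) : frobInner A B = (Aᵀ * B).trace := by
  unfold frobInner
  rw [Finset.sum_comm]
  simp [Matrix.trace, Matrix.mul_apply]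

lemma frob_comm_skew {S : Matrix (Fin m) (Fin m) ℝ} (hS : Sᵀ = -S)
    (A B : Matrix (Fin m) (Fin m) ℝ) :
    frobInner (comm S A) B + frobInner A (comm S B) = 0 := by
  rw [frobInner_trace, frobInner_trace]
  unfold comm
  rw [Matrix.transpose_sub, Matrix.transpose_mul, Matrix.transpose_mul, hS, ← Matrix.trace_add]
  have : (Aᵀ * -S - -S * Aᵀ) * B + Aᵀ * (S * B - B * S) = S * (Aᵀ * B) - (Aᵀ * B) * S := by
    noncomm_ring
  rw [this, Matrix.trace_sub, Matrix.trace_mul_comm, sub_self]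

lemma entry_le_frobNorm (A : Matrix (Fin m) (Fin m) ℝ) (a b : Fin m) : |A a b| ≤ frobNorm A := by
  unfold frobNorm frobSq
  apply Real.abs_le_sqrt
  calc A a b ^ 2 ≤ ∑ b, A a b ^ 2 :=
        Finset.single_le_sum (f := fun b => A a b ^ 2) (fun _ _ => sq_nonneg _) (Finset.mem_univ b)
    _ ≤ _ := Finset.single_le_sum (f := fun a => ∑ b, A a b ^ 2)
        (fun _ _ => Finset.sum_nonneg fun _ _ => sq_nonneg _) (Finset.mem_univ a)

lemma frobSq_nonneg (A : Matrix (Fin m) (Fin m) ℝ) : 0 ≤ frobSq A :=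
  Finset.sum_nonneg fun _ _ => Finset.sum_nonneg fun _ _ => sq_nonneg _

lemma frobNorm_nonneg (A : Matrix (Fin m) (Fin m) ℝ) : 0 ≤ frobNorm A := Real.sqrt_nonneg _

lemma frobNorm_le_normF (Γ : Conn n m) (i j : Fin n) (x : Fin n → ℝ) :
    frobNorm (curv Γ i j x) ≤ normF Γ x := by
  unfold frobNorm normF normSqF
  apply Real.sqrt_le_sqrt
  calc frobSq (curv Γ i j x) ≤ ∑ j, frobSq (curv Γ i j x) :=
        Finset.single_le_sum (f := fun j => frobSq (curv Γ i j x))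
          (fun _ _ => frobSq_nonneg _) (Finset.mem_univ j)
    _ ≤ _ := Finset.single_le_sum (f := fun i => ∑ j, frobSq (curv Γ i j x))
        (fun _ _ => Finset.sum_nonneg fun _ _ => frobSq_nonneg _) (Finset.mem_univ i)

lemma polyB_curv {Γ : Conn n m} (hs : Smooth Γ) (hp : PolyCurvGrowth2 Γ) (i j : Fin n)
    (a b : Fin m) : PolyB (fun x => curv Γ i j x a b) := by
  obtain ⟨p, hp⟩ := hp
  refine PolyB.of_le ((smooth_curv hs i j).cont a b) (PolyB.poly p) fun x => ?_
  have h1 := (entry_le_frobNorm (curv Γ i j x) a b).trans (frobNorm_le_normF Γ i j x)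
  have h2 : 0 ≤ ∑ i, ∑ j, ∑ k, frobNorm (covDer Γ i (fun y => curv Γ j k y) x) :=
    Finset.sum_nonneg fun _ _ => Finset.sum_nonneg fun _ _ => Finset.sum_nonneg fun _ _ =>
      frobNorm_nonneg _
  have h3 : 0 ≤ ∑ i, ∑ j, ∑ k, ∑ l,
          frobNorm (covDer Γ i (fun y => covDer Γ j (fun z => curv Γ k l z) y) x) :=
    Finset.sum_nonneg fun _ _ => Finset.sum_nonneg fun _ _ => Finset.sum_nonneg fun _ _ =>
      Finset.sum_nonneg fun _ _ => frobNorm_nonneg _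
  linarith [hp x]

lemma polyB_covDer {Γ : Conn n m} (hs : Smooth Γ) (hp : PolyCurvGrowth2 Γ) (i j k : Fin n)
    (a b : Fin m) : PolyB (fun x => covDer Γ i (fun y => curv Γ j k y) x a b) := by
  obtain ⟨p, hp⟩ := hp
  refine PolyB.of_le ((smooth_covDer hs i (smooth_curv hs j k)).cont a b) (PolyB.poly p)
    fun x => ?_
  have h1 := entry_le_frobNorm (covDer Γ i (fun y => curv Γ j k y) x) a b
  have h0 : 0 ≤ normF Γ x := Real.sqrt_nonneg _
  have h2 : frobNorm (covDer Γ i (fun y => curv Γ j k y) x) ≤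
      ∑ i, ∑ j, ∑ k, frobNorm (covDer Γ i (fun y => curv Γ j k y) x) := by
    refine le_trans ?_ (Finset.single_le_sum
      (f := fun i => ∑ j, ∑ k, frobNorm (covDer Γ i (fun y => curv Γ j k y) x))
      (fun _ _ => Finset.sum_nonneg fun _ _ => Finset.sum_nonneg fun _ _ => frobNorm_nonneg _)
      (Finset.mem_univ i))
    refine le_trans ?_ (Finset.single_le_sum
      (f := fun j => ∑ k, frobNorm (covDer Γ i (fun y => curv Γ j k y) x))
      (fun _ _ => Finset.sum_nonneg fun _ _ => frobNorm_nonneg _)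
      (Finset.mem_univ j))
    exact (Finset.single_le_sum
      (f := fun k => frobNorm (covDer Γ i (fun y => curv Γ j k y) x))
      (fun _ _ => frobNorm_nonneg _) (Finset.mem_univ k))
  have h3 : 0 ≤ ∑ i, ∑ j, ∑ k, ∑ l,
          frobNorm (covDer Γ i (fun y => covDer Γ j (fun z => curv Γ k l z) y) x) :=
    Finset.sum_nonneg fun _ _ => Finset.sum_nonneg fun _ _ => Finset.sum_nonneg fun _ _ =>
      Finset.sum_nonneg fun _ _ => frobNorm_nonneg _
  linarith [hp x]

lemma polyB_inner {A B : (Fin n → ℝ) → Matrix (Fin m) (Fin m) ℝ}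
    (hA : ∀ a b, PolyB (fun x => A x a b)) (hB : ∀ a b, PolyB (fun x => B x a b)) :
    PolyB (fun x => fB m (A x) (B x)) := by
  simp only [fB_apply, frobInner]
  exact PolyB.sum _ fun a => PolyB.sum _ fun b => (hA a b).mul (hB a b)

lemma inner_der {Γ : Conn n m} (hmc : MetricCompat Γ)
    {A B : (Fin n → ℝ) → Matrix (Fin m) (Fin m) ℝ} (hA : SmoothMat A) (hB : SmoothMat B)
    (j : Fin n) (x : Fin n → ℝ) :
    HasLineDerivAt ℝ (fun x => fB m (A x) (B x))
      (fB m (covDer Γ j A x) (B x) + fB m (A x) (covDer Γ j B x)) x (Pi.single j 1) := by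
  have hl : ∀ {A : (Fin n → ℝ) → Matrix (Fin m) (Fin m) ℝ}, SmoothMat A → ∀ a b,
      HasLineDerivAt ℝ (fun x => A x a b) (pder j A x a b) x (Pi.single j 1) :=
    fun hA a b => (hA.diff a b x).hasFDerivAt.hasLineDerivAt _
  have h := HasDerivAt.fun_sum (u := Finset.univ) fun a _ =>
    HasDerivAt.fun_sum (u := Finset.univ) fun b _ => HasDerivAt.fun_mul (hl hA a b) (hl hB a b)
  refine HasDerivAt.congr_deriv h ?_
  have h0 := frob_comm_skew (hmc x j) (A x) (B x)
  unfold covDer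
  rw [map_add, LinearMap.add_apply, map_add]
  simp only [fB_apply]
  have : frobInner (pder j A x) (B x) + frobInner (A x) (pder j B x) = ∑ a, ∑ b,
      (pder j A x a b * B x a b + A x a b * pder j B x a b) := by
    simp only [frobInner, Finset.sum_add_distrib]
  simp only [zero_smul, add_zero]
  linarith

lemma good_inner {Γ : Conn n m} (hs : Smooth Γ) (hmc : MetricCompat Γ) (hp : PolyCurvGrowth2 Γ)
    (j i k i' k' : Fin n) :
    Good j (fun x => fB m (curv Γ i k x) (curv Γ i' k' x))
      (fun x => fB m (covDer Γ j (fun y => curv Γ i k y) x) (curv Γ i' k' x) +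
        fB m (curv Γ i k x) (covDer Γ j (fun y => curv Γ i' k' y) x)) :=
  ⟨fun x => inner_der hmc (smooth_curv hs i k) (smooth_curv hs i' k') j x,
   polyB_inner (polyB_curv hs hp i k) (polyB_curv hs hp i' k'),
   (polyB_inner (polyB_covDer hs hp j i k) (polyB_curv hs hp i' k')).add
    (polyB_inner (polyB_curv hs hp i k) (polyB_covDer hs hp j i' k'))⟩

lemma fB_symm (A B : Matrix (Fin m) (Fin m) ℝ) : fB m A B = fB m B A := by
  simp [fB_apply, frobInner, mul_comm]

lemma fB_self (A : Matrix (Fin m) (Fin m) ℝ) : fB m A A = frobSq A := by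
  simp [fB_apply, frobInner, frobSq, sq]

/-- The pointwise algebraic identity. -/
lemma pointwise {E : Type*} [AddCommGroup E] [Module ℝ E] (B : E →ₗ[ℝ] E →ₗ[ℝ] ℝ)
    (hB : ∀ u v, B u v = B v u)
    (F : Fin n → Fin n → E) (D : Fin n → Fin n → Fin n → E)
    (hF : ∀ i j, F j i = - F i j) (hD : ∀ i j k, D i k j = - D i j k)
    (hb : ∀ i j k, D i j k + D j k i + D k i j = 0)
    (y V : Fin n → ℝ) (τ c : ℝ)
    (hsol : ∀ k, ∑ i, D i i k = τ • ∑ i, y i • F i k) :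
    ∑ j, ((∑ i, ∑ k, (c * (Pi.single j 1 : Fin n → ℝ) i * B (F i k) (F j k)
            + V i * (B (D j i k) (F j k) + B (F i k) (D j j k)))
          + (-1 / 4) * (c * (∑ i, ∑ k, B (F i k) (F i k))
            + V j * ∑ i, ∑ k, (B (D j i k) (F i k) + B (F i k) (D j i k))))
        - (∑ i, ∑ k, V i * B (F i k) (F j k)
            + (-1 / 4) * (V j * ∑ i, ∑ k, B (F i k) (F i k))) * (y j * τ))
      = (c * (1 - n / 4) + (∑ j, V j * y j) * (τ / 4)) * ∑ i, ∑ k, B (F i k) (F i k) := by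
  have h1 : ∀ i, ∑ j, ∑ k, B (D j i k) (F j k) = (1 / 2) * ∑ j, ∑ k, B (D i j k) (F j k) := by
    intro i
    have hswap : ∑ j, ∑ k, B (D j i k) (F j k) = ∑ j, ∑ k, B (D k i j) (F k j) :=
      Finset.sum_comm
    have : ∑ j, ∑ k, B (D j i k) (F j k) + ∑ j, ∑ k, B (D k i j) (F k j)
        = ∑ j, ∑ k, B (D i j k) (F j k) := by
      simp only [← Finset.sum_add_distrib]
      refine Finset.sum_congr rfl fun j _ => Finset.sum_congr rfl fun k _ => ?_
      have e : D i j k = D j i k - D k i j := by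
        have := hb i j k
        rw [hD j i k] at this
        rw [← sub_eq_zero, ← this]; abel
      rw [hF j k, e]
      simp [sub_eq_add_neg]
    linarith
  have h2 : ∀ i, ∑ j, ∑ k, B (F i k) (D j j k) = τ * ∑ j, ∑ k, y j * B (F i k) (F j k) := by
    intro i
    rw [Finset.sum_comm]
    have : ∀ k, ∑ j, B (F i k) (D j j k) = τ * ∑ j, y j * B (F i k) (F j k) := by
      intro k
      rw [← map_sum, hsol]
      simp
    simp only [this]
    rw [← Finset.mul_sum, Finset.sum_comm]
  set N := ∑ i, ∑ k, B (F i k) (F i k) with hN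
  have e1 : ∑ j, ∑ i, ∑ k, c * (Pi.single j 1 : Fin n → ℝ) i * B (F i k) (F j k) = c * N := by
    rw [hN, Finset.mul_sum]
    refine Finset.sum_congr rfl fun j _ => ?_
    rw [Finset.sum_eq_single j]
    · simp [Finset.mul_sum]
    · intro i _ hi; simp [hi]
    · simp
  have e2 : ∑ j, ∑ i, ∑ k, V i * B (D j i k) (F j k)
      = ∑ j, V j * ((1 / 2) * ∑ i, ∑ k, B (D j i k) (F i k)) := by
    rw [Finset.sum_comm]
    refine Finset.sum_congr rfl fun i _ => ?_
    rw [← h1]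
    simp only [Finset.mul_sum]
  have e3 : ∑ j, ∑ i, ∑ k, V i * B (F i k) (D j j k)
      = ∑ j, (∑ i, ∑ k, V i * B (F i k) (F j k)) * (y j * τ) := by
    rw [Finset.sum_comm]
    have : ∀ i, ∑ j, ∑ k, V i * B (F i k) (D j j k)
        = ∑ j, ∑ k, V i * (τ * (y j * B (F i k) (F j k))) := by
      intro i
      have := h2 i
      simp only [← Finset.mul_sum] at this ⊢
      rw [this]
    simp only [this]
    rw [Finset.sum_comm]
    refine Finset.sum_congr rfl fun j _ => ?_
    simp only [Finset.sum_mul]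
    refine Finset.sum_congr rfl fun i _ => Finset.sum_congr rfl fun k _ => ?_
    ring
  have e4 : ∑ j, (-1 / 4) * (c * N
            + V j * ∑ i, ∑ k, (B (D j i k) (F i k) + B (F i k) (D j i k)))
      = - (n / 4) * c * N - ∑ j, V j * ((1 / 2) * ∑ i, ∑ k, B (D j i k) (F i k)) := by
    have : ∀ j i k, B (F i k) (D j i k) = B (D j i k) (F i k) := fun j i k => hB _ _
    simp only [this, ← two_mul, ← Finset.mul_sum, Finset.sum_add_distrib]
    simp only [mul_add, Finset.sum_const, Finset.card_univ, Fintype.card_fin, nsmul_eq_mul]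
    have : ∑ j, V j * (2 * ∑ i, ∑ k, B (D j i k) (F i k)) =
      4 * ∑ j, V j * ((1 / 2) * ∑ i, ∑ k, B (D j i k) (F i k)) := by
      rw [Finset.mul_sum]
      exact Finset.sum_congr rfl fun j _ => by ring
    rw [this]
    ring
  have e5 : ∑ j, ((-1 / 4) * (V j * N)) * (y j * τ) = - (∑ j, V j * y j) * (τ / 4) * N := by
    rw [← Finset.sum_neg_distrib, Finset.sum_mul, Finset.sum_mul]
    exact Finset.sum_congr rfl fun j _ => by ring
  simp only [mul_add (V _), Finset.sum_sub_distrib, Finset.sum_add_distrib, add_mul] at e4 ⊢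
  rw [e1, e2, e3, e4, e5]
  ring

lemma main_identity {Γ : Conn n m} (hsm : Smooth Γ) (hmc : MetricCompat Γ)
    (x₀ : Fin n → ℝ) (t₀ : ℝ) (ht₀ : 0 < t₀)
    (hsol : IsSolitonAt Γ x₀ t₀) (hpoly : PolyCurvGrowth2 Γ) (c : ℝ) (d : Fin n → ℝ) :
    ∫ x : Fin n → ℝ, ((c * (1 - n / 4) + (∑ j, (c * (x j - x₀ j) + d j) * (x j - x₀ j))
        * ((1 / (2 * t₀)) / 4)) * normSqF Γ x)
        * Real.exp (-(∑ i, (x i - x₀ i) ^ 2) / (4 * t₀)) = 0 := by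
  have hV : ∀ j i, Good j (fun x => c * (x i - x₀ i) + d i)
      (fun _ => c * (Pi.single j 1 : Fin n → ℝ) i) := by
    intro j i
    have := ((Good.const j c).mul (Good.coord j i)).add (Good.const j (-c * x₀ i + d i))
    convert this using 2
    · ring
    · simp
  have hg : ∀ j, Good j _ _ := fun j =>
    (Good.sum Finset.univ fun i => Good.sum Finset.univ fun k =>
      (hV j i).mul (good_inner hsm hmc hpoly j i k j k)).add
    ((Good.const j (-1 / 4)).mul ((hV j j).mul (Good.sum Finset.univ fun i =>
      Good.sum Finset.univ fun k => good_inner hsm hmc hpoly j i k i k)))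
  have hint := fun j => (hg j).int x₀ t₀ ht₀
  have h0 := integral_finsetSum (μ := (volume : Measure (Fin n → ℝ))) Finset.univ
    (fun j _ => (hint j).1)
  rw [Finset.sum_eq_zero fun j _ => (hint j).2] at h0
  rw [← h0]
  congr 1
  ext x
  rw [← Finset.sum_mul]
  congr 1
  have hp := pointwise (fB m) fB_symm (fun i j => curv Γ i j x)
    (fun i j k => covDer Γ i (fun y => curv Γ j k y) x)
    (fun i j => curv_antisymm Γ i j x) (fun i j k => covDer_antisymm hsm i j k x)
    (fun i j k => bianchi hsm i j k x) (fun i => x i - x₀ i) (fun i => c * (x i - x₀ i) + d i)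
    (1 / (2 * t₀)) c (hsol x)
  have hN : ∑ i, ∑ k, fB m (curv Γ i k x) (curv Γ i k x) = normSqF Γ x := by
    simp only [fB_self]; rfl
  rw [hN] at hp
  rw [← hp]
  refine Finset.sum_congr rfl fun j _ => ?_
  rw [hN, Pi.single_eq_same]
  ring

end YM

/-- **Soliton integral identities (a), (b)** (Corollary `5partlemma`). -/
theorem soliton_identities_ab (n m : ℕ) (Γ : YM.Conn n m)
    (hsm : YM.Smooth Γ) (hmc : YM.MetricCompat Γ)
    (x₀ : Fin n → ℝ) (t₀ : ℝ) (ht₀ : 0 < t₀)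
    (hsol : YM.IsSolitonAt Γ x₀ t₀) (hpoly : YM.PolyCurvGrowth2 Γ)
    (G₀ : (Fin n → ℝ) → ℝ)
    (hG₀ : G₀ = fun x => Real.exp (-(∑ i, (x i - x₀ i) ^ 2) / (4 * t₀))) :
    (∫ x : Fin n → ℝ,
        ((4 - (n : ℝ)) + (∑ i, (x i - x₀ i) ^ 2) / (2 * t₀))
          * YM.normSqF Γ x * G₀ x) = 0 ∧
    (∀ γ : Fin n,
      (∫ x : Fin n → ℝ, (x γ - x₀ γ) * YM.normSqF Γ x * G₀ x) = 0) := by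
  subst hG₀
  constructor
  · have h := YM.main_identity hsm hmc x₀ t₀ ht₀ hsol hpoly 1 0
    have h4 := congrArg (fun r => 4 * r) h
    simp only [mul_zero] at h4
    rw [← integral_const_mul] at h4
    rw [← h4]
    congr 1
    ext x
    have : ∑ j, (1 * (x j - x₀ j) + (0 : Fin n → ℝ) j) * (x j - x₀ j) = ∑ i, (x i - x₀ i) ^ 2 :=
      Finset.sum_congr rfl fun j _ => by simp [sq]
    rw [this]
    ring
  · intro γ
    have h := YM.main_identity hsm hmc x₀ t₀ ht₀ hsol hpoly 0 (Pi.single γ 1)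
    have h4 := congrArg (fun r => (8 * t₀) * r) h
    simp only [mul_zero] at h4
    rw [← integral_const_mul] at h4
    rw [← h4]
    congr 1
    ext x
    have : ∑ j, (0 * (x j - x₀ j) + (Pi.single γ 1 : Fin n → ℝ) j) * (x j - x₀ j) = x γ - x₀ γ := by
      simp [Pi.single_apply]
    rw [this]
    field_simp
    ring
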